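/- Let K be a kernel of hyperbolic type on a set X. Then the following are equivalent: (i) for every real t > 0, the pointwise power K^t is a kernel of hyperbolic type; (ii) K is arboreal, i.e., there exist a real tree (T,d) and a map f : X → T such that K(x,y) = exp(d(f(x),f(y))) for all x,y ∈ X. Here a real tree is a metric space (T,d) that is geodesic (for all x,y ∈ T there is a map γ : [0,d(x,y)] → T with γ(0)=x, γ(d(x,y))=y and d(γ(s),γ(t)) = |s−t| for all s,t) and 0-hyperbolic (for all o,x,y,z ∈ T one has (x|z)_o ≥ min((x|y)_o,(y|z)_o), where (x|y)_o = ½(d(o,x)+d(o,y)−d(x,y))). -/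

import Mathlib

universe u

/-- A kernel of hyperbolic type on a set `X`: symmetric, nonnegative, with diagonal `1`,
satisfying the hyperbolic Cauchy–Schwarz inequalities. -/
def IsHypKernel {X : Type*} (K : X → X → ℝ) : Prop :=
  (∀ x y, K x y = K y x) ∧ (∀ x y, 0 ≤ K x y) ∧ (∀ x, K x x = 1) ∧
  ∀ (n : ℕ) (x₀ : X) (x : Fin n → X) (lam : Fin n → ℝ),
    (∑ i, ∑ j, lam i * lam j * K (x i) (x j)) ≤ (∑ k, lam k * K x₀ (x k)) ^ 2

/-- The Gromov product `(x|y)_o` in a metric space. -/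
noncomputable def gromovProd {T : Type*} [MetricSpace T] (o x y : T) : ℝ :=
  (dist o x + dist o y - dist x y) / 2

/-- A real tree: a geodesic metric space that is `0`-hyperbolic. -/
def IsRealTree (T : Type*) [MetricSpace T] : Prop :=
  (∀ x y : T, ∃ γ : ℝ → T, γ 0 = x ∧ γ (dist x y) = y ∧
      ∀ s ∈ Set.Icc (0 : ℝ) (dist x y), ∀ t ∈ Set.Icc (0 : ℝ) (dist x y),
        dist (γ s) (γ t) = |s - t|) ∧
  (∀ o x y z : T, min (gromovProd o x y) (gromovProd o y z) ≤ gromovProd o x z)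

/-- Positivity of an ultrametric-type matrix. -/
lemma ultra_psd {ι : Type*} [DecidableEq ι] (lam : ι → ℝ) : ∀ (N : ℕ) (S : Finset ι) (g : ι → ι → ℝ),
    S.card ≤ N → (∀ i j, g i j = g j i) → (∀ i j, i ∈ S → j ∈ S → 0 ≤ g i j) →
    (∀ i j, g i j ≤ g i i) → (∀ i j k, min (g i j) (g j k) ≤ g i k) →
    0 ≤ ∑ i ∈ S, ∑ j ∈ S, lam i * lam j * g i j := by
  intro N
  induction N with
  | zero =>
    intro S g hS _ _ _ _
    have : S = ∅ := by simpa using hS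
    simp [this]
  | succ N ih =>
    intro S g hS hsym hnn hd hu
    rcases S.eq_empty_or_nonempty with h | hne
    · simp [h]
    obtain ⟨⟨p, q⟩, hpq, hmin⟩ := (S ×ˢ S).exists_min_image (fun z => g z.1 z.2) (hne.product hne)
    simp only [Finset.mem_product] at hpq hmin
    obtain ⟨hp, hq⟩ := hpq
    set m := g p q with hm
    have hm0 : 0 ≤ m := hnn p q hp hq
    set g' : ι → ι → ℝ := fun i j => g i j - m with hg'
    have hsym' : ∀ i j, g' i j = g' j i := fun i j => by simp [hg', hsym i j]
    have hnn' : ∀ i j, i ∈ S → j ∈ S → 0 ≤ g' i j := fun i j hi hj => by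
      have := hmin (i, j) ⟨hi, hj⟩
      simp only [hg']; linarith
    have hd' : ∀ i j, g' i j ≤ g' i i := fun i j => by
      have := hd i j
      simp only [hg']; linarith
    have hu' : ∀ i j k, min (g' i j) (g' j k) ≤ g' i k := fun i j k => by
      have := hu i j k
      simp only [hg']
      rw [min_sub_sub_right]; linarith
    have hq0 : g' p q = 0 := by simp [hg', hm]
    have key : 0 ≤ ∑ i ∈ S, ∑ j ∈ S, lam i * lam j * g' i j := by
      have split : ∀ A B : Finset ι, A ∪ B = S → Disjoint A B →
          (∀ i ∈ A, ∀ j ∈ B, g' i j = 0) →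
          ∑ i ∈ S, ∑ j ∈ S, lam i * lam j * g' i j =
          ∑ i ∈ A, ∑ j ∈ A, lam i * lam j * g' i j + ∑ i ∈ B, ∑ j ∈ B, lam i * lam j * g' i j := by
        intro A B hAB hdis h0
        rw [← hAB, Finset.sum_union hdis]
        congr 1
        · refine Finset.sum_congr rfl fun i hi => ?_
          rw [Finset.sum_union hdis, Finset.sum_eq_zero (s := B), add_zero]
          intro j hj
          rw [h0 i hi j hj, mul_zero]
        · refine Finset.sum_congr rfl fun i hi => ?_
          rw [Finset.sum_union hdis, Finset.sum_eq_zero (s := A), zero_add]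
          intro j hj
          rw [hsym', h0 j hj i hi, mul_zero]
      by_cases hpp : g' p p = 0
      · have hz : ∀ x ∈ S, g' p x = 0 := fun x hx =>
          le_antisymm (hpp ▸ hd' p x) (hnn' p x hp hx)
        rw [split {p} (S.erase p) (by rw [← Finset.insert_eq, Finset.insert_erase hp])
          (by simp)
          (by
            intro i hi j hj
            rw [Finset.mem_singleton.1 hi]
            exact hz j (Finset.mem_of_mem_erase hj))]
        simp only [Finset.sum_singleton, hpp, mul_zero, zero_add]
        refine ih _ g' ?_ hsym' (fun i j hi hj => hnn' i j (Finset.mem_of_mem_erase hi)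
          (Finset.mem_of_mem_erase hj)) hd' hu'
        rw [Finset.card_erase_of_mem hp]; omega
      · have hpp' : 0 < g' p p := lt_of_le_of_ne (hnn' p p hp hp) (Ne.symm hpp)
        have hc := Finset.card_filter_add_card_filter_not (s := S) (fun x => 0 < g' p x)
        have hA : 0 < (S.filter (fun x => 0 < g' p x)).card :=
          Finset.card_pos.2 ⟨p, by simp [hp, hpp']⟩
        have hB : 0 < (S.filter (fun x => ¬ 0 < g' p x)).card :=
          Finset.card_pos.2 ⟨q, by simp [hq, hq0]⟩
        rw [split (S.filter (fun x => 0 < g' p x)) (S.filter (fun x => ¬ 0 < g' p x))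
          (Finset.filter_union_filter_not_eq _ _) (Finset.disjoint_filter_filter_not _ _ _)
          (by
            intro i hi j hj
            rw [Finset.mem_filter] at hi hj
            by_contra hne
            have h1 : 0 < g' i j := lt_of_le_of_ne (hnn' i j hi.1 hj.1) (Ne.symm hne)
            exact hj.2 (lt_of_lt_of_le (lt_min hi.2 h1) (hu' p i j)))]
        refine add_nonneg (ih _ g' (by omega) hsym' ?_ hd' hu') (ih _ g' (by omega) hsym' ?_ hd' hu')
        · exact fun i j hi hj => hnn' i j (Finset.mem_filter.1 hi).1 (Finset.mem_filter.1 hj).1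
        · exact fun i j hi hj => hnn' i j (Finset.mem_filter.1 hi).1 (Finset.mem_filter.1 hj).1
    have heq : ∑ i ∈ S, ∑ j ∈ S, lam i * lam j * g i j =
        m * (∑ i ∈ S, lam i) ^ 2 + ∑ i ∈ S, ∑ j ∈ S, lam i * lam j * g' i j := by
      rw [sq, Finset.sum_mul_sum, Finset.mul_sum, ← Finset.sum_add_distrib]
      refine Finset.sum_congr rfl fun i _ => ?_
      rw [Finset.mul_sum, ← Finset.sum_add_distrib]
      refine Finset.sum_congr rfl fun j _ => ?_
      simp only [hg']; ring
    rw [heq]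
    positivity

lemma four_point {ι : Type*} (G : ι → ι → ℝ) (hsym : ∀ i j, G i j = G j i)
    (hu : ∀ i j k, min (G i j) (G j k) ≤ G i k) (w x y z : ι) :
    min (G x y + G w z) (G y z + G w x) ≤ G x z + G w y := by
  have h1 := hu x y z
  have h2 := hu x w z
  have h3 := hu w x y
  have h4 := hu w z y
  rw [hsym x w] at h2
  rw [hsym z y] at h4
  rw [min_le_iff] at *
  rcases h1 with h1 | h1 <;> rcases h2 with h2 | h2 <;> rcases h3 with h3 | h3 <;>
    rcases h4 with h4 | h4 <;>
    first
    | (left; linarith)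
    | (right; linarith)
    | (by_contra hcon; push Not at hcon; linarith [hcon.1, hcon.2])

/-- Backward direction. -/
lemma hyp_of_tree {X T : Type*} [MetricSpace T] (f : X → T) (hT : IsRealTree T) (t : ℝ)
    (ht : 0 < t) : IsHypKernel fun x y => Real.exp (dist (f x) (f y)) ^ t := by
  have hexp : ∀ x y, Real.exp (dist (f x) (f y)) ^ t = Real.exp (dist (f x) (f y) * t) :=
    fun x y => (Real.exp_mul _ _).symm
  simp only [hexp]
  refine ⟨fun x y => by simp only [dist_comm], fun x y => (Real.exp_pos _).le, fun x => by simp, ?_⟩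
  intro n x₀ x lam
  set g : Fin n → Fin n → ℝ := fun i j =>
    1 - Real.exp (-(2 * t * gromovProd (f x₀) (f (x i)) (f (x j)))) with hg
  have hmono : ∀ a b : ℝ, a ≤ b →
      1 - Real.exp (-(2 * t * a)) ≤ 1 - Real.exp (-(2 * t * b)) := by
    intro a b hab
    have : Real.exp (-(2 * t * b)) ≤ Real.exp (-(2 * t * a)) := by
      apply Real.exp_le_exp.2
      nlinarith
    linarith
  have hpsd := ultra_psd (fun i => lam i * Real.exp (dist (f x₀) (f (x i)) * t)) n Finset.univ g
    (by simp) ?_ ?_ ?_ ?_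
  · have h1 : ∀ i j, lam i * Real.exp (dist (f x₀) (f (x i)) * t) *
        (lam j * Real.exp (dist (f x₀) (f (x j)) * t)) * g i j =
        (lam i * Real.exp (dist (f x₀) (f (x i)) * t)) *
        (lam j * Real.exp (dist (f x₀) (f (x j)) * t)) -
        lam i * lam j * Real.exp (dist (f (x i)) (f (x j)) * t) := by
      intro i j
      have : Real.exp (dist (f (x i)) (f (x j)) * t) = Real.exp (dist (f x₀) (f (x i)) * t) *
          Real.exp (dist (f x₀) (f (x j)) * t) *
          Real.exp (-(2 * t * gromovProd (f x₀) (f (x i)) (f (x j)))) := by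
        rw [← Real.exp_add, ← Real.exp_add]
        congr 1
        simp only [gromovProd]; ring
      rw [this]; simp only [hg]; ring
    simp only [h1, Finset.sum_sub_distrib] at hpsd
    rw [← Finset.sum_mul_sum] at hpsd
    rw [sq]; linarith
  · intro i j
    simp only [hg, gromovProd, dist_comm (f (x i)) (f (x j))]
    ring_nf
  · intro i j _ _
    have := hmono 0 (gromovProd (f x₀) (f (x i)) (f (x j))) (by
      have := dist_triangle_left (f (x i)) (f (x j)) (f x₀)
      simp only [gromovProd]; linarith)
    rw [mul_zero, neg_zero, Real.exp_zero, sub_self] at this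
    exact this
  · intro i j
    apply hmono
    have := dist_triangle (f x₀) (f (x i)) (f (x j))
    simp only [gromovProd, dist_self]; linarith
  · intro i j k
    have := hT.2 (f x₀) (f (x i)) (f (x j)) (f (x k))
    rw [min_le_iff] at this ⊢
    exact this.imp (hmono _ _) (hmono _ _)

/-- Limit argument. -/
lemma limit_arg (a b c : ℝ) (h : ∀ t : ℝ, 0 < t →
    Real.exp (t * c) ≤ 2 * (Real.exp (t * a) + Real.exp (t * b))) : c ≤ max a b := by
  by_contra hc
  push Not at hc
  set M := max a b
  have hpos : 0 < c - M := by linarith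
  have h2 := h (4 / (c - M)) (by positivity)
  set t := 4 / (c - M) with ht
  have ht0 : 0 < t := by positivity
  have ha : Real.exp (t * a) ≤ Real.exp (t * M) :=
    Real.exp_le_exp.2 (mul_le_mul_of_nonneg_left (le_max_left _ _) ht0.le)
  have hb : Real.exp (t * b) ≤ Real.exp (t * M) :=
    Real.exp_le_exp.2 (mul_le_mul_of_nonneg_left (le_max_right _ _) ht0.le)
  have hcM : t * c = 4 + t * M := by
    rw [ht]; field_simp; ring
  rw [hcM, Real.exp_add] at h2
  have h5 : (4 : ℝ) + 1 ≤ Real.exp 4 := Real.add_one_le_exp 4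
  nlinarith [Real.exp_pos (t * M)]

/-- Forward direction, four point condition. -/
lemma four_of_hyp {X : Type*} (d : X → X → ℝ)
    (h : ∀ t : ℝ, 0 < t → IsHypKernel fun x y => Real.exp (t * d x y)) (o x y z : X) :
    d x z + d o y ≤ max (d x y + d o z) (d y z + d o x) := by
  apply limit_arg
  intro t ht
  obtain ⟨hs, -, h1, h2⟩ := h t ht
  beta_reduce at hs h1 h2
  have h3 := h2 3 o ![x, y, z] ![Real.exp (- (t * d o x)), -2 * Real.exp (-(t * d o y)),
    Real.exp (-(t * d o z))]
  simp only [Fin.sum_univ_three, Matrix.cons_val_zero, Matrix.cons_val_one,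
    Matrix.cons_val_two, Matrix.vecHead, Matrix.vecTail, Function.comp, Fin.succ_zero_eq_one] at h3
  rw [hs y x, hs z x, hs z y, h1, h1, h1] at h3
  simp only [mul_add, Real.exp_add, Real.exp_neg] at h3 ⊢
  have px := Real.exp_pos (t * d o x)
  have py := Real.exp_pos (t * d o y)
  have pz := Real.exp_pos (t * d o z)
  set A := Real.exp (t * d o x)
  set B := Real.exp (t * d o y)
  set C := Real.exp (t * d o z)
  set P := Real.exp (t * d x y)
  set Q := Real.exp (t * d y z)
  set R := Real.exp (t * d x z)
  have e1 : A⁻¹ * A + -2 * B⁻¹ * B + C⁻¹ * C = 0 := by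
    field_simp; norm_num
  rw [e1] at h3
  have i1 : 0 ≤ A⁻¹ * A⁻¹ := by positivity
  have i2 : 0 ≤ B⁻¹ * B⁻¹ := by positivity
  have i3 : 0 ≤ C⁻¹ * C⁻¹ := by positivity
  have h4 : A⁻¹ * C⁻¹ * R ≤ 2 * (A⁻¹ * B⁻¹ * P + B⁻¹ * C⁻¹ * Q) := by nlinarith
  have h5 := mul_le_mul_of_nonneg_left h4 (by positivity : 0 ≤ A * B * C)
  have e2 : A * B * C * (A⁻¹ * C⁻¹ * R) = R * B := by field_simp
  have e3 : A * B * C * (2 * (A⁻¹ * B⁻¹ * P + B⁻¹ * C⁻¹ * Q)) = 2 * P * C + 2 * Q * A := by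
    field_simp
  linarith

/-- Data of a `0`-hyperbolic pseudometric with base point. -/
structure TreeData (X : Type u) where
  d : X → X → ℝ
  o : X
  symm : ∀ x y, d x y = d y x
  self : ∀ x, d x x = 0
  four : ∀ o x y z, d x z + d o y ≤ max (d x y + d o z) (d y z + d o x)

namespace TreeData
variable {X : Type u} (D : TreeData X)

lemma tri (x y z : X) : D.d x z ≤ D.d x y + D.d y z := by
  have := D.four y x y z
  rw [D.self, D.symm y x] at this
  rcases le_max_iff.1 this with h | h <;> linarith

lemma nonneg (x y : X) : 0 ≤ D.d x y := by
  have := D.tri x y x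
  rw [D.self, D.symm y x] at this
  linarith

/-- Gromov product at base. -/
noncomputable def gp (x y : X) : ℝ := (D.d D.o x + D.d D.o y - D.d x y) / 2

/-- The points of the tree before quotient. -/
structure Pt (D : TreeData X) where
  /-- leaf -/
  fst : X
  /-- height parameter -/
  snd : ℝ

/-- Constructor. -/
def mk' (x : X) (s : ℝ) : D.Pt := ⟨x, s⟩

lemma mk'_fst (x : X) (s : ℝ) : (D.mk' x s).1 = x := rfl

/-- The height. -/
noncomputable def ht (p : D.Pt) : ℝ := max 0 (min p.2 (D.d D.o p.1))

/-- The product of two points. -/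
noncomputable def P (p q : D.Pt) : ℝ := min (min (D.ht p) (D.ht q)) (D.gp p.1 q.1)

lemma gp_symm (x y : X) : D.gp x y = D.gp y x := by
  simp only [gp, D.symm x y]; ring

lemma gp_self (x : X) : D.gp x x = D.d D.o x := by
  simp only [gp, D.self]; ring

lemma gp_le (x y : X) : D.gp x y ≤ D.d D.o x := by
  have := D.tri D.o x y
  simp only [gp]; linarith

lemma gp_nonneg (x y : X) : 0 ≤ D.gp x y := by
  have := D.tri x D.o y
  rw [D.symm x D.o] at this
  simp only [gp]; linarith

lemma gp_ultra (x y z : X) : min (D.gp x y) (D.gp y z) ≤ D.gp x z := by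
  have := D.four D.o x y z
  rw [min_le_iff]
  simp only [gp]
  rcases le_max_iff.1 this with h | h
  · left; linarith
  · right; linarith

lemma ht_le (p : D.Pt) : D.ht p ≤ D.d D.o p.1 :=
  max_le (D.nonneg _ _) (min_le_right _ _)

lemma ht_nonneg (p : D.Pt) : 0 ≤ D.ht p := le_max_left _ _

lemma ht_mk (x : X) (s : ℝ) (h0 : 0 ≤ s) (h1 : s ≤ D.d D.o x) : D.ht (D.mk' x s) = s := by
  simp only [ht, mk']
  rw [min_eq_left h1, max_eq_right h0]

lemma P_symm (p q : D.Pt) : D.P p q = D.P q p := by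
  simp only [P, D.gp_symm p.1 q.1, min_comm (D.ht p) (D.ht q)]

lemma P_self (p : D.Pt) : D.P p p = D.ht p := by
  simp only [P, min_self, D.gp_self]
  exact min_eq_left (D.ht_le p)

lemma P_le_left (p q : D.Pt) : D.P p q ≤ D.ht p := (min_le_left _ _).trans (min_le_left _ _)

lemma P_le_right (p q : D.Pt) : D.P p q ≤ D.ht q := (min_le_left _ _).trans (min_le_right _ _)

lemma P_nonneg (p q : D.Pt) : 0 ≤ D.P p q :=
  le_min (le_min (D.ht_nonneg _) (D.ht_nonneg _)) (D.gp_nonneg _ _)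

lemma P_ultra (p q r : D.Pt) : min (D.P p q) (D.P q r) ≤ D.P p r := by
  refine le_min (le_min ?_ ?_) ?_
  · exact (min_le_left _ _).trans (D.P_le_left _ _)
  · exact (min_le_right _ _).trans (D.P_le_right _ _)
  · exact (min_le_min (min_le_right _ _) (min_le_right _ _)).trans (D.gp_ultra _ _ _)

noncomputable instance : PseudoMetricSpace D.Pt where
  dist p q := D.ht p + D.ht q - 2 * D.P p q
  dist_self p := by rw [D.P_self]; ring
  dist_comm p q := by rw [D.P_symm]; ring
  dist_triangle p q r := by
    have h1 := D.P_ultra p q r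
    have h2 := D.P_le_right p q
    have h3 := D.P_le_left q r
    rcases min_le_iff.1 h1 with h | h <;> linarith

lemma dist_def (p q : D.Pt) : dist p q = D.ht p + D.ht q - 2 * D.P p q := rfl

lemma dist_same (x : X) (a b : ℝ) (ha : 0 ≤ a) (ha' : a ≤ D.d D.o x) (hb : 0 ≤ b)
    (hb' : b ≤ D.d D.o x) : dist (D.mk' (x) (a)) (D.mk' (x) (b)) = |a - b| := by
  rw [dist_def]
  simp only [P]
  rw [D.ht_mk x a ha ha', D.ht_mk x b hb hb', mk'_fst, mk'_fst, D.gp_self]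
  rcases le_total a b with h | h
  · rw [min_eq_left h, min_eq_left ha', abs_of_nonpos (by linarith)]; ring
  · rw [min_eq_right h, min_eq_left hb', abs_of_nonneg (by linarith)]; ring

lemma dist_cross (p q : D.Pt) (a b : ℝ) (ha : D.P p q ≤ a) (ha' : a ≤ D.ht p) (hb : D.P p q ≤ b)
    (hb' : b ≤ D.ht q) :
    dist (D.mk' (p.1) (a)) (D.mk' (q.1) (b)) = a + b - 2 * D.P p q := by
  have h0 := D.P_nonneg p q
  have e1 : D.ht (D.mk' p.1 (a)) = a := D.ht_mk _ _ (by linarith) (ha'.trans (D.ht_le p))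
  have e2 : D.ht (D.mk' q.1 (b)) = b := D.ht_mk _ _ (by linarith) (hb'.trans (D.ht_le q))
  rw [dist_def, e1, e2]
  have : D.P (D.mk' p.1 (a)) (D.mk' q.1 (b)) = D.P p q := by
    apply le_antisymm
    · simp only [P]
      rw [e1, e2]
      exact min_le_min (min_le_min ha' hb') le_rfl
    · have h3 : D.P p q ≤ D.gp p.1 q.1 := min_le_right _ _
      have h4 : D.P (D.mk' p.1 (a)) (D.mk' q.1 (b)) = min (min a b) (D.gp p.1 q.1) := by
        simp only [P]
        rw [e1, e2, mk'_fst, mk'_fst]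
      rw [h4]
      exact le_min (le_min ha hb) h3
  rw [this]

lemma dist_ht (p : D.Pt) : dist (D.mk' (p.1) (D.ht p)) p = 0 := by
  have e1 : D.ht (D.mk' p.1 (D.ht p)) = D.ht p := D.ht_mk _ _ (D.ht_nonneg p) (D.ht_le p)
  have e2 : D.P (D.mk' p.1 (D.ht p)) p = D.ht p := by
    simp only [P]
    rw [e1, min_self, mk'_fst, D.gp_self]
    exact min_eq_left (D.ht_le p)
  rw [dist_def, e1, e2]; ring

lemma isRealTree : IsRealTree (SeparationQuotient D.Pt) := by
  constructor
  · intro x y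
    obtain ⟨p, rfl⟩ := SeparationQuotient.surjective_mk x
    obtain ⟨q, rfl⟩ := SeparationQuotient.surjective_mk y
    rw [SeparationQuotient.dist_mk]
    have hpq := D.dist_def p q
    have l1 := D.P_le_left p q
    have l2 := D.P_le_right p q
    have l0 := D.P_nonneg p q
    have lp := D.ht_le p
    have lq := D.ht_le q
    set m := D.P p q with hm
    set L := D.ht p - m with hL
    have hmk : ∀ a b : D.Pt, dist a b = 0 → SeparationQuotient.mk a = SeparationQuotient.mk b := by
      intro a b h
      rw [SeparationQuotient.mk_eq_mk, Metric.inseparable_iff]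
      exact h
    let γ : ℝ → D.Pt := fun r => if r ≤ L then D.mk' p.1 (D.ht p - r) else D.mk' q.1 (m + (r - L))
    have γ1 : ∀ r, r ≤ L → γ r = D.mk' p.1 (D.ht p - r) := fun r h => if_pos h
    have γ2 : ∀ r, ¬ r ≤ L → γ r = D.mk' q.1 (m + (r - L)) := fun r h => if_neg h
    refine ⟨fun r => SeparationQuotient.mk (γ r), ?_, ?_, ?_⟩
    · apply hmk
      rw [γ1 0 (by linarith), sub_zero]
      exact D.dist_ht p
    · apply hmk
      by_cases h : dist p q ≤ L
      · have hq : D.ht q = m := by linarith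
        have hd : dist p q = L := by linarith
        rw [γ1 _ h, hd]
        have e : D.ht p - L = m := by linarith
        rw [e]
        have h1 := D.dist_cross p q m m le_rfl l1 le_rfl l2
        have h2 := D.dist_ht q
        rw [hq] at h2
        have h3 := dist_triangle (D.mk' (p.1) (m)) (D.mk' (q.1) (m)) q
        have h4 : (0:ℝ) ≤ dist (D.mk' (p.1) (m)) q := dist_nonneg
        linarith
      · rw [γ2 _ h]
        have e : m + (dist p q - L) = D.ht q := by linarith
        rw [e]
        exact D.dist_ht q
    · intro s hs t ht
      rw [SeparationQuotient.dist_mk]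
      have hs1 := hs.1
      have hs2 := hs.2
      have ht1 := ht.1
      have ht2 := ht.2
      by_cases h1 : s ≤ L <;> by_cases h2 : t ≤ L
      · rw [γ1 s h1, γ1 t h2, D.dist_same _ _ _ (by linarith) (by linarith) (by linarith)
          (by linarith), abs_sub_comm]
        congr 1; ring
      · rw [γ1 s h1, γ2 t h2, D.dist_cross p q _ _ (by linarith) (by linarith) (by linarith)
          (by linarith), abs_of_nonpos (by linarith)]
        linarith
      · rw [dist_comm, γ1 t h2, γ2 s h1, D.dist_cross p q _ _ (by linarith) (by linarith)
          (by linarith) (by linarith), abs_of_nonneg (by linarith)]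
        linarith
      · rw [γ2 s h1, γ2 t h2, D.dist_same _ _ _ (by linarith) (by linarith) (by linarith)
          (by linarith)]
        congr 1; ring
  · intro w x y z
    obtain ⟨w, rfl⟩ := SeparationQuotient.surjective_mk w
    obtain ⟨x, rfl⟩ := SeparationQuotient.surjective_mk x
    obtain ⟨y, rfl⟩ := SeparationQuotient.surjective_mk y
    obtain ⟨z, rfl⟩ := SeparationQuotient.surjective_mk z
    simp only [gromovProd, SeparationQuotient.dist_mk, dist_def]
    have := four_point D.P D.P_symm D.P_ultra w x y z
    rw [min_le_iff] at this ⊢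
    rcases this with h | h
    · left; linarith
    · right; linarith

lemma dist_emb (x y : X) :
    dist (SeparationQuotient.mk (D.mk' (x) (D.d D.o x)))
      (SeparationQuotient.mk (D.mk' (y) (D.d D.o y))) = D.d x y := by
  rw [SeparationQuotient.dist_mk, dist_def]
  simp only [P]
  rw [D.ht_mk x _ (D.nonneg _ _) le_rfl, D.ht_mk y _ (D.nonneg _ _) le_rfl,
    mk'_fst, mk'_fst, min_eq_right (le_min (D.gp_le x y) (D.gp_symm x y ▸ D.gp_le y x))]
  simp only [gp]; ring

end TreeData

/-- A kernel of hyperbolic type `K` satisfies that all positive powers `K^t` are again of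
hyperbolic type if and only if `K` is arboreal, i.e. of the form
`K(x,y) = exp d(f(x), f(y))` for a map `f` into a real tree. -/
theorem forall_pow_isHypKernel_iff_arboreal {X : Type u} (K : X → X → ℝ)
    (hK : IsHypKernel K) :
    (∀ t : ℝ, 0 < t → IsHypKernel fun x y => K x y ^ t) ↔
    ∃ (T : Type u) (_ : MetricSpace T) (f : X → T),
      IsRealTree T ∧ ∀ x y : X, K x y = Real.exp (dist (f x) (f y)) := by
  constructor
  · intro h
    have hge : ∀ x y, 1 ≤ K x y := by
      intro x y
      have h1 := hK.2.2.2 1 x ![y] ![1]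
      simp only [Fin.sum_univ_one, Matrix.cons_val_zero, hK.2.2.1 y] at h1
      nlinarith [hK.2.1 x y]
    have hexp : ∀ x y, K x y = Real.exp (Real.log (K x y)) := fun x y =>
      (Real.exp_log (by linarith [hge x y])).symm
    rcases isEmpty_or_nonempty X with hX | ⟨⟨o⟩⟩
    · refine ⟨PUnit, inferInstance, fun _ => PUnit.unit, ⟨?_, ?_⟩, fun x => (hX.false x).elim⟩
      · intro x y
        refine ⟨fun _ => x, rfl, rfl, ?_⟩
        intro s hs t ht
        have e : dist x y = 0 := by rw [Subsingleton.elim x y, dist_self]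
        rw [e] at hs ht
        have h1 : s = 0 := le_antisymm hs.2 hs.1
        have h2 : t = 0 := le_antisymm ht.2 ht.1
        simp [h1, h2]
      · intro o x y z
        rw [Subsingleton.elim x o, Subsingleton.elim y o, Subsingleton.elim z o]
        simp
    · let D : TreeData X :=
        { d := fun x y => Real.log (K x y)
          o := o
          symm := fun x y => by rw [hK.1 x y]
          self := fun x => by rw [hK.2.2.1 x, Real.log_one]
          four := by
            apply four_of_hyp
            intro t ht
            have h1 := h t ht
            have e : (fun x y => K x y ^ t) = fun x y => Real.exp (t * Real.log (K x y)) := by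
              funext x y
              rw [Real.rpow_def_of_pos (by linarith [hge x y]), mul_comm]
            rw [e] at h1
            exact h1 }
      refine ⟨SeparationQuotient D.Pt, inferInstance,
        fun x => SeparationQuotient.mk (D.mk' (x) (D.d D.o x)), D.isRealTree, fun x y => ?_⟩
      rw [D.dist_emb]
      exact hexp x y
  · rintro ⟨T, _, f, hT, hf⟩ t ht
    simp only [hf]
    exact hyp_of_tree f hT t ht
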